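/- arXiv:2012.00325 — 5 statements merged into one kernel-verified Lean document; each statement's English description precedes it below -/
import Mathlib

section
/- Suppose φ satisfies the coupled electro-quasistatic step Gᵀ * M_σ * G *ᵥ φ = Gᵀ *ᵥ j + (1/Δt) • (Gᵀ * M_ε * G *ᵥ φ_prev) − (1/Δt) • (Gᵀ * M_κ *ᵥ (a_cur − a_prev)), and a_next satisfies the magneto-quasistatic step (Cᵀ * M_ν * C + (1/Δt) • M_κ) *ᵥ a_next = j + (1/Δt) • (M_κ *ᵥ a_prev) − M_σ * G *ᵥ φ + (1/Δt) • (M_ε * G *ᵥ φ_prev). Then the discrete divergence of the conduction term is preserved: Gᵀ * M_κ *ᵥ a_next = Gᵀ * M_κ *ᵥ a_cur. -/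
open Matrix

/-- **Two-step Darwin scheme, divergence preservation (single iteration).**
If `φ` satisfies the coupled electro-quasistatic step and `a_next` satisfies the
magneto-quasistatic step, then the discrete divergence of the conduction term is
preserved: `Gᵀ * M_κ *ᵥ a_next = Gᵀ * M_κ *ᵥ a_cur`. -/
theorem twoStepDarwin_div_preserved
    {n_f n_e n_n : ℕ}
    (C : Matrix (Fin n_f) (Fin n_e) ℝ) (G : Matrix (Fin n_e) (Fin n_n) ℝ)
    (hCG : C * G = 0)
    (M_ν : Matrix (Fin n_f) (Fin n_f) ℝ)
    (M_κ M_ε M_σ : Matrix (Fin n_e) (Fin n_e) ℝ)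
    (Δt : ℝ) (hΔt : 0 < Δt)
    (hσ : M_σ = M_κ + (1 / Δt) • M_ε)
    (j a_prev a_cur a_next : Fin n_e → ℝ) (φ φ_prev : Fin n_n → ℝ)
    (hφ : (Gᵀ * M_σ * G) *ᵥ φ =
        Gᵀ *ᵥ j + (1 / Δt) • ((Gᵀ * M_ε * G) *ᵥ φ_prev)
          - (1 / Δt) • ((Gᵀ * M_κ) *ᵥ (a_cur - a_prev)))
    (ha : (Cᵀ * M_ν * C + (1 / Δt) • M_κ) *ᵥ a_next =
        j + (1 / Δt) • (M_κ *ᵥ a_prev) - (M_σ * G) *ᵥ φ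
          + (1 / Δt) • ((M_ε * G) *ᵥ φ_prev)) :
    (Gᵀ * M_κ) *ᵥ a_next = (Gᵀ * M_κ) *ᵥ a_cur := by
  have hdivcurl : Gᵀ * (Cᵀ * M_ν * C) = 0 := by
    rw [← Matrix.mul_assoc, ← Matrix.mul_assoc, ← transpose_mul, hCG]
    simp
  have hdiv := congrArg (Gᵀ *ᵥ ·) ha
  simp only [mulVec_mulVec, mulVec_add, mulVec_sub, mulVec_smul, Matrix.mul_add, hdivcurl,
    zero_add, Matrix.mul_smul, smul_mulVec, ← Matrix.mul_assoc] at hdiv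
  rw [hφ, mulVec_sub, smul_sub] at hdiv
  have hscaled : (1 / Δt) • ((Gᵀ * M_κ) *ᵥ a_next) = (1 / Δt) • ((Gᵀ * M_κ) *ᵥ a_cur) := by
    rw [hdiv]
    abel
  exact smul_right_injective _ (one_div_pos.mpr hΔt).ne' hscaled
end

section
/- Let a : ℕ → (Fin n_e → ℝ) and φ : ℕ → (Fin n_n → ℝ) be sequences of iterates such that for every i : ℕ, φ i satisfies Gᵀ * M_σ * G *ᵥ (φ i) = Gᵀ *ᵥ j + (1/Δt) • (Gᵀ * M_ε * G *ᵥ φ_prev) − (1/Δt) • (Gᵀ * M_κ *ᵥ (a i − a_prev)), and a (i+1) satisfies (Cᵀ * M_ν * C + (1/Δt) • M_κ) *ᵥ a (i+1) = j + (1/Δt) • (M_κ *ᵥ a_prev) − M_σ * G *ᵥ (φ i) + (1/Δt) • (M_ε * G *ᵥ φ_prev). Then for every i : ℕ, Gᵀ * M_κ *ᵥ a i = Gᵀ * M_κ *ᵥ a 0; that is, every iterate maintains the discrete divergence of the initial guess a 0. -/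
open Matrix

/-- **Two-step Darwin scheme, divergence preservation along the iteration.**
Every iterate `a i` of the coupled iterative process maintains the discrete
divergence of the initial guess `a 0`. -/
theorem twoStepDarwin_iterates_div_preserved
    {n_f n_e n_n : ℕ}
    (C : Matrix (Fin n_f) (Fin n_e) ℝ) (G : Matrix (Fin n_e) (Fin n_n) ℝ)
    (hCG : C * G = 0)
    (M_ν : Matrix (Fin n_f) (Fin n_f) ℝ)
    (M_κ M_ε M_σ : Matrix (Fin n_e) (Fin n_e) ℝ)
    (Δt : ℝ) (hΔt : 0 < Δt)
    (hσ : M_σ = M_κ + (1 / Δt) • M_ε)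
    (j a_prev : Fin n_e → ℝ) (φ_prev : Fin n_n → ℝ)
    (a : ℕ → (Fin n_e → ℝ)) (φ : ℕ → (Fin n_n → ℝ))
    (hφ : ∀ i : ℕ, (Gᵀ * M_σ * G) *ᵥ (φ i) =
        Gᵀ *ᵥ j + (1 / Δt) • ((Gᵀ * M_ε * G) *ᵥ φ_prev)
          - (1 / Δt) • ((Gᵀ * M_κ) *ᵥ (a i - a_prev)))
    (ha : ∀ i : ℕ, (Cᵀ * M_ν * C + (1 / Δt) • M_κ) *ᵥ a (i + 1) =
        j + (1 / Δt) • (M_κ *ᵥ a_prev) - (M_σ * G) *ᵥ (φ i)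
          + (1 / Δt) • ((M_ε * G) *ᵥ φ_prev)) :
    ∀ i : ℕ, (Gᵀ * M_κ) *ᵥ a i = (Gᵀ * M_κ) *ᵥ a 0 := by
  have hGC : Gᵀ * Cᵀ = 0 := by rw [← transpose_mul, hCG, transpose_zero]
  have step (i : ℕ) : (Gᵀ * M_κ) *ᵥ a (i + 1) = (Gᵀ * M_κ) *ᵥ a i := by
    have hdiv := congrArg (Gᵀ *ᵥ ·) (ha i)
    have hcurl : Gᵀ * (Cᵀ * M_ν * C) = 0 := by
      rw [← Matrix.mul_assoc, ← Matrix.mul_assoc, hGC, Matrix.zero_mul, Matrix.zero_mul]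
    simp only [mulVec_add, mulVec_sub, mulVec_smul, mulVec_mulVec, Matrix.mul_add, hcurl,
      zero_add, Matrix.mul_smul, smul_mulVec, ← Matrix.mul_assoc, hφ i] at hdiv
    have hinv : (1 / Δt) ≠ 0 := (one_div_pos.mpr hΔt).ne'
    refine smul_right_injective _ hinv (hdiv.trans ?_)
    simp only [smul_sub]
    abel
  intro i
  induction i with
  | zero => rfl
  | succ i ih => rw [step, ih]
end

section
/- Let a : ℕ → (Fin n_e → ℝ), φ : ℕ → (Fin n_n → ℝ), and j : ℕ → (Fin n_e → ℝ) be sequences over time steps such that for every n : ℕ the two-step scheme holds: first the decoupled electro-quasistatic equation Gᵀ * M_σ * G *ᵥ φ (n+1) = Gᵀ *ᵥ j (n+1) + (1/Δt) • (Gᵀ * M_ε * G *ᵥ φ n), and then the magneto-quasistatic equation (Cᵀ * M_ν * C + (1/Δt) • M_κ) *ᵥ a (n+1) = j (n+1) + (1/Δt) • (M_κ *ᵥ a n) − M_σ * G *ᵥ φ (n+1) + (1/Δt) • (M_ε * G *ᵥ φ n). Then for every n : ℕ, Gᵀ * M_κ *ᵥ a n = Gᵀ * M_κ *ᵥ a 0;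 i.e., the initialization vector a 0 of the time integration acts as an initial gauge that is maintained for all time steps. -/
open Matrix

/-- **Two-step Darwin time-domain scheme: the initial gauge is maintained for all
time steps.** If the decoupled electro-quasistatic equation and the
magneto-quasistatic equation of the two-step scheme hold for every time step, then
`Gᵀ * M_κ *ᵥ a n = Gᵀ * M_κ *ᵥ a 0` for all `n`, i.e. the initialization vector
`a 0` acts as an initial gauge maintained throughout the time integration. -/
theorem twoStepDarwin_timeSteps_initial_gauge
    {n_f n_e n_n : ℕ}
    (C : Matrix (Fin n_f) (Fin n_e) ℝ) (G : Matrix (Fin n_e) (Fin n_n) ℝ)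
    (hCG : C * G = 0)
    (M_ν : Matrix (Fin n_f) (Fin n_f) ℝ)
    (M_κ M_ε M_σ : Matrix (Fin n_e) (Fin n_e) ℝ)
    (Δt : ℝ) (hΔt : 0 < Δt)
    (hσ : M_σ = M_κ + (1 / Δt) • M_ε)
    (a : ℕ → (Fin n_e → ℝ)) (φ : ℕ → (Fin n_n → ℝ)) (j : ℕ → (Fin n_e → ℝ))
    (hφ : ∀ n : ℕ, (Gᵀ * M_σ * G) *ᵥ φ (n + 1) =
        Gᵀ *ᵥ j (n + 1) + (1 / Δt) • ((Gᵀ * M_ε * G) *ᵥ φ n))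
    (ha : ∀ n : ℕ, (Cᵀ * M_ν * C + (1 / Δt) • M_κ) *ᵥ a (n + 1) =
        j (n + 1) + (1 / Δt) • (M_κ *ᵥ a n) - (M_σ * G) *ᵥ φ (n + 1)
          + (1 / Δt) • ((M_ε * G) *ᵥ φ n)) :
    ∀ n : ℕ, (Gᵀ * M_κ) *ᵥ a n = (Gᵀ * M_κ) *ᵥ a 0 := by
  have hGC : Gᵀ * Cᵀ = 0 := by rw [← transpose_mul, hCG, transpose_zero]
  have curl_free : Gᵀ * (Cᵀ * M_ν * C) = 0 := by
    rw [Matrix.mul_assoc, ← Matrix.mul_assoc, hGC, Matrix.zero_mul]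
  intro n
  induction n with
  | zero => rfl
  | succ n ih =>
    rw [← ih]
    have h := congrArg (Gᵀ *ᵥ ·) (ha n)
    simp only [mulVec_add, mulVec_sub, mulVec_smul, mulVec_mulVec, Matrix.mul_add, curl_free,
      zero_add, Matrix.mul_smul, smul_mulVec, ← Matrix.mul_assoc, hφ n] at h
    refine smul_right_injective _ (one_div_pos.mpr hΔt).ne' (h.trans ?_)
    dsimp only
    abel
end

section
/- Let a : ℕ → (Fin n_e → ℝ) and φ : ℕ → (Fin n_n → ℝ) be sequences of iterates such that for every i : ℕ, φ i satisfies Gᵀ * M_σ * G *ᵥ (φ i) = Gᵀ *ᵥ j + (1/Δt) • (Gᵀ * M_ε * G *ᵥ φ_prev) − (1/Δt) • (Gᵀ * M_κ *ᵥ (a i − a_prev)), and a (i+1) satisfies (Cᵀ * M_ν * C + (1/Δt) • M_κ) *ᵥ a (i+1) = j + (1/Δt) • (M_κ *ᵥ a_prev) − M_σ * G *ᵥ (φ i) + (1/Δt) • (M_ε * G *ᵥ φ_prev). If the iterates a i converge, as i → ∞ and in the product topology on Fin n_e → ℝ, to a limit a⋆ : Fin n_e → ℝ, then the converged solution maintains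 the discrete divergence of the initial guess: Gᵀ * M_κ *ᵥ a⋆ = Gᵀ * M_κ *ᵥ a 0. -/
open Matrix

/-- **Two-step Darwin scheme: the converged solution maintains the discrete
divergence of the initial guess.** If the iterates `a i` of the coupled iterative
process converge (in the product topology) to a limit `a⋆`, then
`Gᵀ * M_κ *ᵥ a⋆ = Gᵀ * M_κ *ᵥ a 0`. -/
theorem twoStepDarwin_limit_div_preserved
    {n_f n_e n_n : ℕ}
    (C : Matrix (Fin n_f) (Fin n_e) ℝ) (G : Matrix (Fin n_e) (Fin n_n) ℝ)
    (hCG : C * G = 0)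
    (M_ν : Matrix (Fin n_f) (Fin n_f) ℝ)
    (M_κ M_ε M_σ : Matrix (Fin n_e) (Fin n_e) ℝ)
    (Δt : ℝ) (hΔt : 0 < Δt)
    (hσ : M_σ = M_κ + (1 / Δt) • M_ε)
    (j a_prev : Fin n_e → ℝ) (φ_prev : Fin n_n → ℝ)
    (a : ℕ → (Fin n_e → ℝ)) (φ : ℕ → (Fin n_n → ℝ))
    (hφ : ∀ i : ℕ, (Gᵀ * M_σ * G) *ᵥ (φ i) =
        Gᵀ *ᵥ j + (1 / Δt) • ((Gᵀ * M_ε * G) *ᵥ φ_prev)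
          - (1 / Δt) • ((Gᵀ * M_κ) *ᵥ (a i - a_prev)))
    (ha : ∀ i : ℕ, (Cᵀ * M_ν * C + (1 / Δt) • M_κ) *ᵥ a (i + 1) =
        j + (1 / Δt) • (M_κ *ᵥ a_prev) - (M_σ * G) *ᵥ (φ i)
          + (1 / Δt) • ((M_ε * G) *ᵥ φ_prev))
    (a_star : Fin n_e → ℝ)
    (hlim : Filter.Tendsto a Filter.atTop (nhds a_star)) :
    (Gᵀ * M_κ) *ᵥ a_star = (Gᵀ * M_κ) *ᵥ a 0 := by
  have hGC : Gᵀ * Cᵀ = 0 := by rw [← transpose_mul, hCG, transpose_zero]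
  have hstep : ∀ i, (Gᵀ * M_κ) *ᵥ a (i + 1) = (Gᵀ * M_κ) *ᵥ a i := by
    intro i
    have hdiv := congrArg (Gᵀ *ᵥ ·) (ha i)
    simp only [mulVec_add, mulVec_sub, mulVec_smul, mulVec_mulVec, Matrix.mul_add,
      Matrix.mul_smul, ← Matrix.mul_assoc, hGC, Matrix.zero_mul, zero_add, smul_mulVec,
      hφ i] at hdiv
    refine smul_right_injective _ (one_div_pos.mpr hΔt).ne' (hdiv.trans ?_)
    simp only [smul_sub]
    abel
  have hconst : ∀ i, (Gᵀ * M_κ) *ᵥ a i = (Gᵀ * M_κ) *ᵥ a 0 := by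
    intro i
    induction i with
    | zero => rfl
    | succ i ih => rw [hstep, ih]
  have hcont : Continuous fun v : Fin n_e → ℝ => (Gᵀ * M_κ) *ᵥ v :=
    continuous_const.matrix_mulVec continuous_id
  refine tendsto_nhds_unique ((hcont.tendsto a_star).comp hlim) ?_
  simp only [Function.comp_def, hconst]
  exact tendsto_const_nhds
end

section
/- Suppose φ_next solves the decoupled electro-quasistatic equation Gᵀ * M_σ * G *ᵥ φ_next = Gᵀ *ᵥ j + (1/Δt) • (Gᵀ * M_ε * G *ᵥ φ_prev), and a_next solves the magneto-quasistatic equation (Cᵀ * M_ν * C + (1/Δt) • M_κ) *ᵥ a_next = j + (1/Δt) • (M_κ *ᵥ a_prev) − M_σ * G *ᵥ φ_next + (1/Δt) • (M_ε * G *ᵥ φ_prev). Then Gᵀ * M_κ *ᵥ (a_next − a_prev) = 0, and consequently the pair (φ_next, a_next) also solves the fully coupled system: Gᵀ * M_σ * G *ᵥ φ_next = Gᵀ *ᵥ j + (1/Δt) • (Gᵀ * M_ε * G *ᵥ φ_prev) − (1/Δt) • (Gᵀ * M_κ *ᵥ (a_next − a_prev)). In other words, the solution of the decoupled two-step Darwin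 scheme is a solution of the coupled implicit-Euler Darwin system. -/
open Matrix

/-- **The solution of the decoupled two-step Darwin scheme solves the coupled
implicit-Euler Darwin system.** If `φ_next` solves the decoupled electro-quasistatic
equation and `a_next` solves the magneto-quasistatic equation, then
`Gᵀ * M_κ *ᵥ (a_next − a_prev) = 0` and the pair `(φ_next, a_next)` also solves the
fully coupled system. -/
theorem twoStepDarwin_solves_coupled
    {n_f n_e n_n : ℕ}
    (C : Matrix (Fin n_f) (Fin n_e) ℝ) (G : Matrix (Fin n_e) (Fin n_n) ℝ)
    (hCG : C * G = 0)
    (M_ν : Matrix (Fin n_f) (Fin n_f) ℝ)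
    (M_κ M_ε M_σ : Matrix (Fin n_e) (Fin n_e) ℝ)
    (Δt : ℝ) (hΔt : 0 < Δt)
    (hσ : M_σ = M_κ + (1 / Δt) • M_ε)
    (j a_prev a_next : Fin n_e → ℝ) (φ_next φ_prev : Fin n_n → ℝ)
    (hφ : (Gᵀ * M_σ * G) *ᵥ φ_next =
        Gᵀ *ᵥ j + (1 / Δt) • ((Gᵀ * M_ε * G) *ᵥ φ_prev))
    (ha : (Cᵀ * M_ν * C + (1 / Δt) • M_κ) *ᵥ a_next =
        j + (1 / Δt) • (M_κ *ᵥ a_prev) - (M_σ * G) *ᵥ φ_next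
          + (1 / Δt) • ((M_ε * G) *ᵥ φ_prev)) :
    (Gᵀ * M_κ) *ᵥ (a_next - a_prev) = 0 ∧
      (Gᵀ * M_σ * G) *ᵥ φ_next =
        Gᵀ *ᵥ j + (1 / Δt) • ((Gᵀ * M_ε * G) *ᵥ φ_prev)
          - (1 / Δt) • ((Gᵀ * M_κ) *ᵥ (a_next - a_prev)) := by
  have hGC : Gᵀ * Cᵀ = 0 := by rw [← transpose_mul, hCG, transpose_zero]
  have hdiv := congrArg (Gᵀ *ᵥ ·) ha
  simp only [mulVec_add, mulVec_sub, mulVec_smul, mulVec_mulVec, add_mulVec,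
    smul_mulVec, ← Matrix.mul_assoc, hGC, Matrix.zero_mul,
    zero_mulVec, zero_add, hφ] at hdiv
  have hκ : (Gᵀ * M_κ) *ᵥ (a_next - a_prev) = 0 := by
    have hsmul : (1 / Δt) • ((Gᵀ * M_κ) *ᵥ (a_next - a_prev)) = 0 := by
      rw [mulVec_sub, smul_sub, hdiv]
      abel
    exact (smul_eq_zero.mp hsmul).resolve_left (one_div_pos.mpr hΔt).ne'
  exact ⟨hκ, by rw [hκ, smul_zero, sub_zero, hφ]⟩
end
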